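/- arXiv:2302.02883 — 4 statements merged into one kernel-verified Lean document; each statement's English description precedes it below -/
import Mathlib

section
/- SL(2,ℤ) has the presentation ⟨s, t | (st)³ = s², s⁴ = 1⟩: the group homomorphism from the presented group on two generators s, t with relators (st)³s⁻² and s⁴ to SL(2,ℤ), sending the generator s to the matrix [[0,-1],[1,0]] and the generator t to the matrix [[1,1],[0,1]], is a group isomorphism. -/
open Matrix MatrixGroups

/-- The two generators `s` and `t` of the presentation. -/
inductive SL2Gen : Type
  | s : SL2Gen
  | t : SL2Gen

/-- The two relators `(st)³s⁻²` and `s⁴` of the presentation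
`⟨s, t | (st)³ = s², s⁴ = 1⟩`. -/
def SL2Rels : Set (FreeGroup SL2Gen) :=
  {(FreeGroup.of SL2Gen.s * FreeGroup.of SL2Gen.t) ^ 3 * (FreeGroup.of SL2Gen.s ^ 2)⁻¹,
    FreeGroup.of SL2Gen.s ^ 4}

/-- The map sending the generator `s` to the matrix `[[0,-1],[1,0]]` and the
generator `t` to the matrix `[[1,1],[0,1]]`. -/
def SL2GenMap : SL2Gen → SL(2, ℤ)
  | SL2Gen.s => ModularGroup.S
  | SL2Gen.t => ModularGroup.T

/-!
Put `u = s t`, so that `u³ = s²`, and let `P` be the monoid generated by `t` and `s t⁻¹ s⁻¹`, whose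
images are the elementary matrices `[[1,1],[0,1]]` and `[[1,0],[1,1]]`. The relation `u³ = s²` alone
rewrites every element of the group as `uⁱ m sʲ` with `m ∈ P`. If such an element maps to `1`, then
the image of `m`, a matrix with nonnegative entries, is one of the finitely many `U⁻ⁱ S⁻ʲ`; the only
nonnegative one among them is `1`, and an element of `P` mapping to `1` is trivial because neither
elementary matrix has a nonnegative inverse.
-/

theorem eq_one_of_mem_closure_of_map_eq_one {M H : Type*} [Monoid M] [Group H] (φ : M →* H)
    (N : Submonoid H) {X : Set M} (hX : ∀ x ∈ X, φ x ∈ N) (hX_inv : ∀ x ∈ X, (φ x)⁻¹ ∉ N) {m : M}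
    (hm : m ∈ Submonoid.closure X) (hφm : φ m = 1) : m = 1 := by
  have closure_le : Submonoid.closure X ≤ N.comap φ := Submonoid.closure_le.mpr hX
  induction hm using Submonoid.closure_induction_left with
  | one => rfl
  | mul_left x hx y hy _ =>
    rw [map_mul] at hφm
    have inv_mem : (φ x)⁻¹ ∈ N := eq_inv_of_mul_eq_one_right hφm ▸ closure_le hy
    exact absurd inv_mem (hX_inv x hx)

section NormalForms

variable {G : Type*} [Group G]

/-- The monoid generated by `t` and `s t⁻¹ s⁻¹`, the abstract counterpart of the matrices in
`SL(2, ℤ)` with nonnegative entries. -/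
def positiveMonoid (s t : G) : Submonoid G :=
  Submonoid.closure {t, s * t⁻¹ * s⁻¹}

/-- The elements `(st)ⁱ m sʲ` with `m` in the positive monoid. The exponents are not unique: if
`(st)³ = s²`, then `(i, j)` and `(i + 3, j - 2)` give the same element. -/
def normalForms (s t : G) : Set G :=
  {g | ∃ i : ℤ, ∃ m ∈ positiveMonoid s t, ∃ j : ℤ, g = (s * t) ^ i * m * s ^ j}

variable {s t : G}

theorem one_mem_normalForms : 1 ∈ normalForms s t :=
  ⟨0, 1, one_mem _, 0, by simp⟩

theorem zpow_mul_mem_normalForms (k : ℤ) {g : G} (hg : g ∈ normalForms s t) :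
    (s * t) ^ k * g ∈ normalForms s t := by
  obtain ⟨i, m, hm, j, rfl⟩ := hg
  exact ⟨k + i, m, hm, j, by simp only [_root_.zpow_add, mul_assoc]⟩

theorem mul_sq_eq_of_mul_pow_three_eq_sq (h : (s * t) ^ 3 = s ^ 2) :
    (s * t) ^ 2 = s * (s * t⁻¹ * s⁻¹) :=
  calc (s * t) ^ 2 = (s * t) ^ 3 * (s * t)⁻¹ := by rw [pow_succ _ 2, mul_inv_cancel_right]
    _ = s * (s * t⁻¹ * s⁻¹) := by simp only [h, sq, _root_.mul_inv_rev, mul_assoc]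

theorem mul_mul_zpow_mem_normalForms (h : (s * t) ^ 3 = s ^ 2) {m : G}
    (hm : m ∈ positiveMonoid s t) (j : ℤ) : s * m * s ^ j ∈ normalForms s t := by
  induction hm using Submonoid.closure_induction_left with
  | one => exact ⟨0, 1, one_mem _, 1 + j, by simp [_root_.zpow_one_add]⟩
  | mul_left x hx m hm _ =>
    rcases hx with rfl | rfl
    · exact ⟨1, m, hm, j, by simp only [zpow_one, mul_assoc]⟩
    · exact ⟨2, m, hm, j, by
        simp only [zpow_ofNat, mul_sq_eq_of_mul_pow_three_eq_sq h, mul_assoc]⟩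

theorem mul_mem_normalForms (h : (s * t) ^ 3 = s ^ 2) {g : G} (hg : g ∈ normalForms s t) :
    s * g ∈ normalForms s t := by
  obtain ⟨i, m, hm, j, rfl⟩ := hg
  have comm : Commute s ((s * t) ^ (3 * (i / 3))) := by
    rw [_root_.zpow_mul, zpow_ofNat, h]
    exact (Commute.self_pow s 2).zpow_right _
  have reduce_exponent : s * ((s * t) ^ i * m * s ^ j) =
      (s * t) ^ (3 * (i / 3)) * (s * (s * t) ^ (i % 3) * m * s ^ j) := by
    conv_lhs => rw [← Int.mul_ediv_add_emod i 3, _root_.zpow_add]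
    simp only [← mul_assoc, comm.eq]
  rw [reduce_exponent]
  apply zpow_mul_mem_normalForms
  obtain hr | hr | hr : i % 3 = 0 ∨ i % 3 = 1 ∨ i % 3 = 2 := by lia
  · simpa [hr] using mul_mul_zpow_mem_normalForms h hm j
  · refine ⟨3, t * m, mul_mem (Submonoid.subset_closure (.inl rfl)) hm, j, ?_⟩
    simp only [hr, zpow_ofNat, pow_one, h, sq, mul_assoc]
  · refine ⟨3, s * t⁻¹ * s⁻¹ * m, mul_mem (Submonoid.subset_closure (.inr rfl)) hm, j, ?_⟩
    simp only [hr, zpow_ofNat, mul_sq_eq_of_mul_pow_three_eq_sq h, h, sq s, mul_assoc]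

theorem closure_subset_normalForms (h : (s * t) ^ 3 = s ^ 2) :
    (Subgroup.closure {s, t} : Set G) ⊆ normalForms s t := by
  have inv_mul_mem {g : G} (hg : g ∈ normalForms s t) : s⁻¹ * g ∈ normalForms s t := by
    have inv_eq : s⁻¹ = (s * t) ^ (-3 : ℤ) * s := by
      rw [_root_.zpow_neg, zpow_ofNat, h, sq, _root_.mul_inv_rev, inv_mul_cancel_right]
    rw [inv_eq, mul_assoc]
    exact zpow_mul_mem_normalForms _ (mul_mem_normalForms h hg)
  intro g hg
  induction hg using Subgroup.closure_induction_left with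
  | one => exact one_mem_normalForms
  | mul_left x hx y _ ih =>
    rcases hx with rfl | rfl
    · exact mul_mem_normalForms h ih
    · simpa [mul_assoc] using inv_mul_mem (zpow_mul_mem_normalForms 1 ih)
  | inv_mul_cancel x hx y _ ih =>
    rcases hx with rfl | rfl
    · exact inv_mul_mem ih
    · simpa [mul_assoc] using zpow_mul_mem_normalForms (-1) (mul_mem_normalForms h ih)

end NormalForms

/-- The monoid of matrices of determinant `1` with nonnegative entries. -/
def nonnegSpecialLinear (n R : Type*) [Fintype n] [DecidableEq n] [CommRing R] [PartialOrder R]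
    [IsOrderedRing R] : Submonoid (SpecialLinearGroup n R) where
  carrier := {A | ∀ i j, 0 ≤ A i j}
  one_mem' i j := by
    change 0 ≤ (1 : Matrix n n R) i j
    rw [Matrix.one_apply]
    split_ifs <;> simp
  mul_mem' hA hB i j := Finset.sum_nonneg fun k _ ↦ mul_nonneg (hA i k) (hB k j)

instance (n R : Type*) [Fintype n] [DecidableEq n] [CommRing R] [PartialOrder R]
    [IsOrderedRing R] [DecidableLE R] (A : SpecialLinearGroup n R) :
    Decidable (A ∈ nonnegSpecialLinear n R) :=
  decidable_of_iff (∀ p : n × n, 0 ≤ A p.1 p.2) Prod.forall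

section SL2Z

open ModularGroup (S T)

-- The pair `(3, 2)` appears because `(ST)³ = S² = -1`.
theorem exponents_eq_of_inv_mul_inv_nonneg :
    ∀ i ∈ Finset.Ico (0 : ℤ) 6, ∀ j ∈ Finset.Ico (0 : ℤ) 4,
      ((S * T) ^ i)⁻¹ * (S ^ j)⁻¹ ∈ nonnegSpecialLinear (Fin 2) ℤ →
        i = 0 ∧ j = 0 ∨ i = 3 ∧ j = 2 := by
  decide

variable {G : Type*} [Group G] {s t : G} {φ : G →* SL(2, ℤ)}

theorem map_mem_nonneg_and_inv_notMem (hs : φ s = S) (ht : φ t = T) :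
    ∀ x ∈ ({t, s * t⁻¹ * s⁻¹} : Set G),
      φ x ∈ nonnegSpecialLinear (Fin 2) ℤ ∧ (φ x)⁻¹ ∉ nonnegSpecialLinear (Fin 2) ℤ := by
  rintro x (rfl | rfl) <;> simp only [map_mul, map_inv, hs, ht] <;> decide

theorem map_nonneg_of_mem_positiveMonoid (hs : φ s = S) (ht : φ t = T)
    {m : G} (hm : m ∈ positiveMonoid s t) : φ m ∈ nonnegSpecialLinear (Fin 2) ℤ := by
  have le_comap : positiveMonoid s t ≤ (nonnegSpecialLinear (Fin 2) ℤ).comap φ :=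
    Submonoid.closure_le.mpr fun x hx ↦ (map_mem_nonneg_and_inv_notMem hs ht x hx).1
  exact le_comap hm

theorem eq_one_of_mem_positiveMonoid_of_map_eq_one (hs : φ s = S) (ht : φ t = T) {m : G}
    (hm : m ∈ positiveMonoid s t) (hφm : φ m = 1) : m = 1 :=
  eq_one_of_mem_closure_of_map_eq_one φ (nonnegSpecialLinear (Fin 2) ℤ)
    (fun x hx ↦ (map_mem_nonneg_and_inv_notMem hs ht x hx).1)
    (fun x hx ↦ (map_mem_nonneg_and_inv_notMem hs ht x hx).2) hm hφm

theorem eq_one_of_mem_normalForms_of_map_eq_one (h3 : (s * t) ^ 3 = s ^ 2) (h4 : s ^ 4 = 1)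
    (hs : φ s = S) (ht : φ t = T) {g : G} (hg : g ∈ normalForms s t)
    (hφg : φ g = 1) : g = 1 := by
  obtain ⟨i, m, hm, j, rfl⟩ := hg
  have h6 : (s * t) ^ 6 = 1 := by rw [pow_mul _ 3 2, h3, ← pow_mul, h4]
  rw [zpow_eq_zpow_emod' i h6, zpow_eq_zpow_emod' j h4] at hφg ⊢
  have hi : i % 6 ∈ Finset.Ico 0 6 := by rw [Finset.mem_Ico]; lia
  have hj : j % 4 ∈ Finset.Ico 0 4 := by rw [Finset.mem_Ico]; lia
  have map_eq : φ m = ((S * T) ^ (i % 6))⁻¹ * (S ^ (j % 4))⁻¹ := by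
    simp only [map_mul, map_zpow, hs, ht] at hφg
    exact eq_inv_mul_of_mul_eq (eq_inv_of_mul_eq_one_left hφg)
  have eq_one (hφm : φ m = 1) : m = 1 := eq_one_of_mem_positiveMonoid_of_map_eq_one hs ht hm hφm
  have nonneg := map_nonneg_of_mem_positiveMonoid hs ht hm
  rw [map_eq] at nonneg
  obtain ⟨hi0, hj0⟩ | ⟨hi3, hj2⟩ := exponents_eq_of_inv_mul_inv_nonneg _ hi _ hj nonneg
  · have hm1 : m = 1 := eq_one (by rw [map_eq, hi0, hj0]; decide)
    simp [hm1, hi0, hj0]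
  · have hm1 : m = 1 := eq_one (by rw [map_eq, hi3, hj2]; decide)
    simp only [hm1, Nat.cast_ofNat, hi3, hj2, zpow_ofNat, h3, mul_one]
    rw [← pow_add, h4]

theorem injective_of_map_eq_S_of_map_eq_T (h3 : (s * t) ^ 3 = s ^ 2) (h4 : s ^ 4 = 1)
    (hst : Subgroup.closure {s, t} = ⊤) (hs : φ s = S) (ht : φ t = T) :
    Function.Injective φ := by
  refine (injective_iff_map_eq_one φ).mpr fun g hφg ↦ ?_
  have hg : g ∈ Subgroup.closure {s, t} := hst ▸ Subgroup.mem_top g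
  exact eq_one_of_mem_normalForms_of_map_eq_one h3 h4 hs ht (closure_subset_normalForms h3 hg) hφg

theorem surjective_of_map_eq_S_of_map_eq_T (hs : φ s = S) (ht : φ t = T) :
    Function.Surjective φ := by
  rw [← MonoidHom.range_eq_top, eq_top_iff, ← SpecialLinearGroup.SL2Z_generators,
    Subgroup.closure_le]
  rintro _ (rfl | rfl)
  exacts [⟨s, hs⟩, ⟨t, ht⟩]

end SL2Z

theorem lift_SL2GenMap_eq_one : ∀ r ∈ SL2Rels, FreeGroup.lift SL2GenMap r = 1 := by
  rintro r (rfl | rfl)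
  · simp only [map_mul, map_pow, map_inv, FreeGroup.lift_apply_of, SL2GenMap]
    decide
  · simp only [map_pow, FreeGroup.lift_apply_of, SL2GenMap]
    decide

theorem closure_of_SL2Gen (rels : Set (FreeGroup SL2Gen)) :
    Subgroup.closure {(PresentedGroup.of SL2Gen.s : PresentedGroup rels),
      PresentedGroup.of SL2Gen.t} = ⊤ := by
  rw [← PresentedGroup.closure_range_of rels]
  congr 1
  ext g
  constructor
  · rintro (rfl | rfl)
    exacts [⟨SL2Gen.s, rfl⟩, ⟨SL2Gen.t, rfl⟩]
  · rintro ⟨_ | _, rfl⟩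
    exacts [.inl rfl, .inr rfl]

/-- `SL(2, ℤ)` has the presentation `⟨s, t | (st)³ = s², s⁴ = 1⟩`: the relators are sent
to `1` by the induced map on the free group (so that the homomorphism
`PresentedGroup SL2Rels →* SL(2, ℤ)` sending `s ↦ [[0,-1],[1,0]]`, `t ↦ [[1,1],[0,1]]`
is well defined), and this homomorphism is a group isomorphism (i.e. bijective). -/
theorem sl2z_presentation :
    ∃ h : ∀ r ∈ SL2Rels, FreeGroup.lift SL2GenMap r = 1,
      Function.Bijective (PresentedGroup.toGroup h) := by
  have h3 : (PresentedGroup.of SL2Gen.s * PresentedGroup.of SL2Gen.t : PresentedGroup SL2Rels) ^ 3 =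
      PresentedGroup.of SL2Gen.s ^ 2 :=
    mul_inv_eq_one.mp (PresentedGroup.one_of_mem (rels := SL2Rels) (.inl rfl))
  have h4 : (PresentedGroup.of SL2Gen.s : PresentedGroup SL2Rels) ^ 4 = 1 :=
    PresentedGroup.one_of_mem (rels := SL2Rels) (.inr rfl)
  have map_s := PresentedGroup.toGroup.of lift_SL2GenMap_eq_one (x := SL2Gen.s)
  have map_t := PresentedGroup.toGroup.of lift_SL2GenMap_eq_one (x := SL2Gen.t)
  exact ⟨lift_SL2GenMap_eq_one,
    injective_of_map_eq_S_of_map_eq_T h3 h4 (closure_of_SL2Gen SL2Rels) map_s map_t,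
    surjective_of_map_eq_S_of_map_eq_T map_s map_t⟩
end

section
/- There exist infinitely many finite-index subgroups of SL(2,ℤ) that are not congruence subgroups; that is, the set of subgroups H of SL(2,ℤ) of finite index such that for no positive integer m does H contain Γ(m) is infinite. -/
open Matrix MatrixGroups

/-!
A branch `L` of `log Δ` on the upper half-plane satisfies `L (z + 1) = L z + 2πi`, because
`Δ = q ∏ (1 - q ^ n) ^ 24`. The quotient `Δ (N z) / Δ z` is invariant under `Γ₀(N)`, so the periods
of its logarithm `L (N z) - L z` form a homomorphism `Γ₀(N) → ℤ`, which sends `T` to `N - 1`.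
For `N = 2` it is onto, and reducing it modulo `n` gives characters of `Γ₀(2)` taking `T` to an
element of order `n`.

On the other hand, if a character `χ` of `Γ₀(N)` is trivial on `Γ(M)` and `N ∣ M`, then `χ T` has
order `d ∣ M`, and conjugating `T` by `γ ≡ diag (a, a⁻¹)` mod `M` shows `χ T = χ T ^ (a ^ 2)`. Hence
every unit modulo `d` squares to one, which forces `d ∣ 24`. The kernels of the characters of
`Γ₀(2)` with `n > 24` are therefore pairwise distinct noncongruence subgroups.
-/

open Complex hiding Gamma
open ModularForm CongruenceSubgroup ModularGroup Function.Periodic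
open scoped Real
open UpperHalfPlane hiding I

lemma finiteIndex_map_subtype {G : Type*} [Group G] (H : Subgroup G) (K : Subgroup H)
    [H.FiniteIndex] [K.FiniteIndex] : (K.map H.subtype).FiniteIndex := by
  rw [Subgroup.finiteIndex_iff, Subgroup.index_map_subtype]
  exact mul_ne_zero Subgroup.FiniteIndex.index_ne_zero Subgroup.FiniteIndex.index_ne_zero

instance {G X : Type*} [Group G] [MulAction G X] [TopologicalSpace X] [ContinuousConstSMul G X]
    (H : Subgroup G) : ContinuousConstSMul H X where
  continuous_const_smul h := continuous_const_smul (h : G)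

lemma isSimplyConnected_of_convex {E : Type*} [AddCommGroup E] [Module ℝ E] [TopologicalSpace E]
    [ContinuousAdd E] [ContinuousSMul ℝ E] {s : Set E} (hs : Convex ℝ s) (hne : s.Nonempty) :
    IsSimplyConnected s := by
  have : ContractibleSpace s := hs.contractibleSpace hne
  exact inferInstanceAs (SimplyConnectedSpace s)

section LogPeriods

variable {X : Type*} [TopologicalSpace X] [PreconnectedSpace X]

lemma exists_int_forall_eq_add_of_exp_eq {f g : X → ℂ} (hf : Continuous f) (hg : Continuous g)
    (hfg : ∀ x, exp (f x) = exp (g x)) : ∃ n : ℤ, ∀ x, f x = g x + n * (2 * π * I) := by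
  choose n hn using fun x ↦ exp_eq_exp_iff_exists_int.mp (hfg x)
  have hmem (x : X) : f x - g x ∈ AddSubgroup.zmultiples (2 * π * I) :=
    ⟨n x, by simp [hn x]⟩
  obtain hX | ⟨⟨x₀⟩⟩ := isEmpty_or_nonempty X
  · exact ⟨0, hX.elim⟩
  refine ⟨n x₀, fun x ↦ ?_⟩
  have hconst : f x - g x = f x₀ - g x₀ :=
    isPreconnected_univ.constant_of_mapsTo (T := AddSubgroup.zmultiples (2 * π * I))
      ⟨inferInstanceAs (DiscreteTopology (AddSubgroup.zmultiples _))⟩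
      (hf.sub hg).continuousOn (fun x _ ↦ hmem x) (Set.mem_univ x) (Set.mem_univ x₀)
  linear_combination hconst + hn x₀

lemma exists_hom_eq_add_of_exp_smul_eq {G : Type*} [Group G] [MulAction G X]
    [ContinuousConstSMul G X] [Nonempty X] {L : X → ℂ} (hL : Continuous L)
    (hexp : ∀ (g : G) x, exp (L (g • x)) = exp (L x)) :
    ∃ Φ : G →* Multiplicative ℤ, ∀ g x, L (g • x) = L x + (Φ g).toAdd * (2 * π * I) := by
  choose n hn using fun g : G ↦
    exists_int_forall_eq_add_of_exp_eq (hL.comp (continuous_const_smul g)) hL (hexp g)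
  refine ⟨.mk' (fun g ↦ .ofAdd (n g)) fun g h ↦ ?_, hn⟩
  obtain ⟨x⟩ := ‹Nonempty X›
  have hgh : (n (g * h) : ℂ) * (2 * π * I) = (n g + n h) * (2 * π * I) := by
    have h₁ := hn (g * h) x
    have h₂ := hn g (h • x)
    have h₃ := hn h x
    simp only [Function.comp_apply, mul_smul] at h₁ h₂ h₃
    linear_combination h₂ + h₃ - h₁
  have hadd : n (g * h) = n g + n h := by
    exact_mod_cast (mul_right_cancel₀ two_pi_I_ne_zero hgh :)
  rw [hadd, ofAdd_add]

end LogPeriods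

section Discriminant

lemma tprod_one_sub_pow_ne_zero {q : ℂ} (hq : ‖q‖ < 1) : ∏' n : ℕ, (1 - q ^ (n + 1)) ≠ 0 := by
  simp_rw [sub_eq_add_neg]
  refine tprod_one_add_ne_zero_of_summable (fun n ↦ ?_) ?_
  · rw [← sub_eq_add_neg, sub_ne_zero]
    intro h
    have := pow_lt_one₀ (norm_nonneg q) hq n.succ_ne_zero
    rw [← norm_pow, ← h, norm_one] at this
    exact this.false
  · simpa using (summable_nat_add_iff 1).mpr (summable_geometric_of_lt_one (norm_nonneg q) hq)

lemma exists_continuousOn_exp_eq_tprod_one_sub_pow :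
    ∃ l : ℂ → ℂ, ContinuousOn l (Metric.ball 0 1) ∧
      ∀ q ∈ Metric.ball 0 1, exp (l q) = ∏' n : ℕ, (1 - q ^ (n + 1)) := by
  have hball : IsSimplyConnected (Metric.ball (0 : ℂ) 1) :=
    isSimplyConnected_of_convex (convex_ball 0 1) ⟨0, by simp⟩
  refine exists_continuousOn_eqOn_exp_comp hball Metric.isOpen_ball
    differentiableOn_tprod_one_sub_pow.continuousOn ?_
  rintro ⟨q, hq, h0⟩
  exact tprod_one_sub_pow_ne_zero (by simpa using hq) h0

lemma qParam_one_mem_ball (z : ℍ) : qParam 1 z ∈ Metric.ball (0 : ℂ) 1 := by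
  simpa using norm_qParam_lt_one 1 z

lemma exists_log_discriminant : ∃ L : ℍ → ℂ, Continuous L ∧ (∀ z, exp (L z) = discriminant z) ∧
    ∀ (n : ℤ) z, L (T ^ n • z) = L z + n * (2 * π * I) := by
  obtain ⟨l, hl, hexp⟩ := exists_continuousOn_exp_eq_tprod_one_sub_pow
  refine ⟨fun z ↦ 2 * π * I * z + 24 * l (qParam 1 z), ?_, fun z ↦ ?_, fun n z ↦ ?_⟩
  · have : Continuous fun z : ℍ ↦ l (qParam 1 z) :=
      hl.comp_continuous (by fun_prop) qParam_one_mem_ball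
    exact (by fun_prop : Continuous fun z : ℍ ↦ 2 * π * I * z).add (continuous_const.mul this)
  · have hq := qParam_one_mem_ball z
    have h24 : exp (24 * l (qParam 1 z)) = exp (l (qParam 1 z)) ^ 24 :=
      mod_cast exp_nat_mul (l (qParam 1 z)) 24
    rw [Complex.exp_add, h24, hexp _ hq, discriminant_eq_q_prod,
      (multipliable_one_sub_pow (mem_ball_zero_iff.mp hq)).tprod_pow]
    simp [qParam]
  · have hq : qParam 1 (z + n) = qParam 1 z := by
      rw [qParam, qParam, ← exp_periodic.int_mul n (2 * π * I * z / _)]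
      congr 1
      push_cast
      ring
    simp only [coe_T_zpow_smul_eq, hq]
    ring

lemma discriminant_smul (γ : SL(2, ℤ)) (z : ℍ) :
    discriminant (γ • z) = denom γ z ^ 12 * discriminant z := by
  have hslash := congrFun (SlashInvariantForm.slash_action_generators_SL2Z
    discriminant_S_invariant discriminant_T_invariant γ) z
  rw [SL_slash_apply, _root_.zpow_neg,
    mul_inv_eq_iff_eq_mul₀ (zpow_ne_zero _ (denom_ne_zero γ z)), mul_comm] at hslash
  exact_mod_cast hslash

end Discriminant

section LevelRaise

variable (N : ℕ) [NeZero N]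

/-- The map `z ↦ N z` of the upper half-plane, composition with which raises the level of a modular
form from `1` to `N`. It is encoded as the action on `ℍ` of the positive real `N`. -/
noncomputable def levelRaise (z : ℍ) : ℍ :=
  (⟨N, Nat.cast_pos.mpr (NeZero.pos N)⟩ : {x : ℝ // 0 < x}) • z

lemma coe_levelRaise (z : ℍ) : (levelRaise N z : ℂ) = N * z := by
  simp [levelRaise]

lemma continuous_levelRaise : Continuous (levelRaise N) :=
  (isometry_pos_mul _).continuous

lemma levelRaise_T_smul (z : ℍ) : levelRaise N (T • z) = T ^ (N : ℤ) • levelRaise N z := by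
  apply UpperHalfPlane.ext
  rw [coe_T_zpow_smul_eq, coe_levelRaise, coe_levelRaise, ← zpow_one T, coe_T_zpow_smul_eq]
  push_cast
  ring

variable {N}

lemma exists_levelRaise_smul_eq {γ : SL(2, ℤ)} (hγ : γ ∈ Gamma0 N) :
    ∃ γ' : SL(2, ℤ), ∀ z, levelRaise N (γ • z) = γ' • levelRaise N z ∧
      denom γ' (levelRaise N z) = denom γ z := by
  rw [Gamma0_mem, ZMod.intCast_zmod_eq_zero_iff_dvd] at hγ
  obtain ⟨c, hc⟩ := hγ
  have hdet : γ 0 0 * γ 1 1 - N * γ 0 1 * c = 1 := by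
    have := γ.det_coe
    rw [det_fin_two, hc] at this
    linear_combination this
  have hN : (N : ℂ) * c = γ 1 0 := mod_cast hc.symm
  let γ' : SL(2, ℤ) := ⟨!![γ 0 0, N * γ 0 1; c, γ 1 1], by rwa [det_fin_two_of]⟩
  have hdenom (z : ℍ) : denom γ' (levelRaise N z) = denom γ z := by
    rw [denom_apply, denom_apply, coe_levelRaise, ← hN]
    simp only [γ', of_apply, cons_val', cons_val]
    ring
  refine ⟨γ', fun z ↦ ⟨UpperHalfPlane.ext ?_, hdenom z⟩⟩
  have hz := hdenom z
  rw [denom_apply, denom_apply, coe_levelRaise] at hz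
  rw [coe_levelRaise, coe_specialLinearGroup_apply, coe_specialLinearGroup_apply]
  simp only [algebraMap_int_eq, eq_intCast, ofReal_intCast, coe_levelRaise, hz]
  simp only [γ', of_apply, cons_val', cons_val, Int.cast_mul, Int.cast_natCast]
  ring

lemma discriminant_levelRaise_div_smul {γ : SL(2, ℤ)} (hγ : γ ∈ Gamma0 N) (z : ℍ) :
    discriminant (levelRaise N (γ • z)) / discriminant (γ • z) =
      discriminant (levelRaise N z) / discriminant z := by
  obtain ⟨γ', hγ'⟩ := exists_levelRaise_smul_eq hγ
  rw [(hγ' z).1, discriminant_smul, discriminant_smul, (hγ' z).2,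
    mul_div_mul_left _ _ (pow_ne_zero _ (denom_ne_zero _ _))]

end LevelRaise

instance : ContinuousConstSMul SL(2, ℤ) ℍ where
  continuous_const_smul γ := continuous_const_smul (SpecialLinearGroup.mapGL ℝ γ)

lemma T_mem_Gamma0 (N : ℕ) : T ∈ Gamma0 N := by simp [coe_T]

lemma exists_hom_Gamma0_T_eq (N : ℕ) [NeZero N] : ∃ Φ : Gamma0 N →* Multiplicative ℤ,
    Φ ⟨T, T_mem_Gamma0 N⟩ = .ofAdd (N - 1 : ℤ) := by
  obtain ⟨L, hL, hexp, hT⟩ := exists_log_discriminant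
  obtain ⟨Φ, hΦ⟩ := exists_hom_eq_add_of_exp_smul_eq (G := Gamma0 N)
    (L := fun z ↦ L (levelRaise N z) - L z)
    ((hL.comp (continuous_levelRaise N)).sub hL) fun γ z ↦ by
      simp only [Complex.exp_sub, hexp]
      exact discriminant_levelRaise_div_smul γ.2 z
  have hI := hΦ ⟨T, T_mem_Gamma0 N⟩ UpperHalfPlane.I
  have hT₁ := hT 1 UpperHalfPlane.I
  rw [zpow_one] at hT₁
  simp only [Subgroup.mk_smul, levelRaise_T_smul, hT, hT₁] at hI
  have h : ((Φ ⟨T, T_mem_Gamma0 N⟩).toAdd : ℂ) = (N - 1 : ℤ) := by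
    refine mul_right_cancel₀ two_pi_I_ne_zero ?_
    push_cast at hI ⊢
    linear_combination -hI
  exact ⟨Φ, Int.cast_injective h⟩

lemma exists_hom_Gamma0_two_orderOf_T_eq (n : ℕ) :
    ∃ χ : Gamma0 2 →* Multiplicative (ZMod n), orderOf (χ ⟨T, T_mem_Gamma0 2⟩) = n := by
  obtain ⟨Φ, hΦ⟩ := exists_hom_Gamma0_T_eq 2
  refine ⟨(Int.castAddHom (ZMod n)).toMultiplicative.comp Φ, ?_⟩
  rw [MonoidHom.comp_apply, hΦ]
  simp [orderOf_ofAdd_eq_addOrderOf, ZMod.addOrderOf_one]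

section Arithmetic

lemma dvd_sq_sub_one_of_units_sq_eq_one {d e c : ℕ} [NeZero d] (h : ∀ u : (ZMod d)ˣ, u ^ 2 = 1)
    (hed : e ∣ d) (hc : c.Coprime e) : (e : ℤ) ∣ c ^ 2 - 1 := by
  obtain ⟨u, hu⟩ := ZMod.unitsMap_surjective hed (ZMod.unitOfCoprime c hc)
  have hsq : ZMod.unitOfCoprime c hc ^ 2 = 1 := by rw [← hu, ← map_pow, h, map_one]
  rw [← ZMod.intCast_zmod_eq_zero_iff_dvd]
  simpa [sub_eq_zero] using congrArg Units.val hsq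

lemma dvd_24_of_units_sq_eq_one {d : ℕ} [NeZero d] (h : ∀ u : (ZMod d)ˣ, u ^ 2 = 1) : d ∣ 24 := by
  obtain ⟨k, m, hm, rfl⟩ := Nat.exists_eq_two_pow_mul_odd (NeZero.ne d)
  have hk : ((2 ^ k : ℕ) : ℤ) ∣ 3 ^ 2 - 1 :=
    dvd_sq_sub_one_of_units_sq_eq_one h (dvd_mul_right _ _) (Nat.Coprime.pow_right k (by decide))
  have hm : (m : ℤ) ∣ 2 ^ 2 - 1 :=
    dvd_sq_sub_one_of_units_sq_eq_one h (dvd_mul_left _ _) (Nat.coprime_two_left.mpr hm)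
  norm_num at hk hm
  exact mul_dvd_mul (by exact_mod_cast hk : 2 ^ k ∣ 8) (by exact_mod_cast hm : m ∣ 3)

lemma exists_SL2_diagonal_mod {M : ℕ} (u : (ZMod M)ˣ) : ∃ γ : SL(2, ℤ),
    (γ 0 0 : ZMod M) = u ∧ (γ 0 1 : ZMod M) = 0 ∧ (γ 1 0 : ZMod M) = 0 := by
  obtain ⟨a, ha⟩ := ZMod.intCast_surjective (u : ZMod M)
  have hcop : IsCoprime a ((M : ℤ) ^ 2) :=
    ((ZMod.coe_int_isUnit_iff_isCoprime a M).mp (ha ▸ u.isUnit)).symm.pow_right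
  obtain ⟨y, x, hxy⟩ := hcop
  refine ⟨⟨!![a, M; -M * x, y], ?_⟩, by simpa using ha, by simp, by simp⟩
  rw [det_fin_two_of]
  linear_combination hxy

lemma conj_T_mul_T_zpow_mem_Gamma {M : ℕ} {γ : SL(2, ℤ)} (h₀₁ : (γ 0 1 : ZMod M) = 0)
    (h₁₀ : (γ 1 0 : ZMod M) = 0) : γ * T * γ⁻¹ * T ^ (-γ 0 0 ^ 2) ∈ Gamma M := by
  have hdet : (γ 0 0 : ZMod M) ^ 2 * γ 1 1 = γ 0 0 := by
    have := congrArg (Int.cast : ℤ → ZMod M) (γ.det_coe.symm.trans (det_fin_two _))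
    push_cast [h₀₁] at this
    linear_combination -(γ 0 0 : ZMod M) * this
  rw [Gamma_mem', _root_.zpow_neg, map_mul, map_inv, mul_inv_eq_one, map_mul,
    map_inv, mul_inv_eq_iff_eq_mul, ← map_mul]
  ext i j
  fin_cases i <;> fin_cases j <;>
    simp [-map_zpow, Matrix.mul_apply, coe_T, coe_T_zpow, h₀₁, h₁₀, hdet]

lemma Gamma_le_Gamma_of_dvd {m M : ℕ} (h : m ∣ M) : Gamma M ≤ Gamma m := by
  intro γ hγ
  rw [Gamma_mem] at hγ ⊢
  have reduce {a b : ZMod M} : a = b → ZMod.castHom h (ZMod m) a = ZMod.castHom h (ZMod m) b :=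
    congrArg _
  simpa only [map_intCast, map_one, map_zero] using
    hγ.imp reduce (And.imp reduce (And.imp reduce reduce))

lemma Gamma0_le_Gamma0_of_dvd {m M : ℕ} (h : m ∣ M) : Gamma0 M ≤ Gamma0 m := by
  intro γ hγ
  rw [Gamma0_mem, ZMod.intCast_zmod_eq_zero_iff_dvd] at hγ ⊢
  exact (Int.natCast_dvd_natCast.mpr h).trans hγ

variable {A : Type*} [CommGroup A]

lemma map_T_pow_24_eq_one_of_Gamma_le_ker {M : ℕ} [NeZero M] {G : Subgroup SL(2, ℤ)}
    (hG : Gamma0 M ≤ G) {χ : G →* A} (hχ : (Gamma M).subgroupOf G ≤ χ.ker) :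
    χ ⟨T, hG (T_mem_Gamma0 M)⟩ ^ 24 = 1 := by
  set t : G := ⟨T, hG (T_mem_Gamma0 M)⟩
  have hdvd : orderOf (χ t) ∣ M := by
    rw [orderOf_dvd_iff_pow_eq_one, ← map_pow]
    have hT : T ^ M ∈ Gamma M := by
      simpa only [zpow_natCast, Int.natAbs_natCast] using ModularGroup_T_pow_mem_Gamma M M dvd_rfl
    exact hχ hT
  have : NeZero (orderOf (χ t)) := ⟨ne_zero_of_dvd_ne_zero (NeZero.ne M) hdvd⟩
  refine orderOf_dvd_iff_pow_eq_one.mp (dvd_24_of_units_sq_eq_one fun v ↦ ?_)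
  obtain ⟨u, rfl⟩ := ZMod.unitsMap_surjective hdvd v
  obtain ⟨γ, hγu, h₀₁, h₁₀⟩ := exists_SL2_diagonal_mod u
  let g : G := ⟨γ, hG h₁₀⟩
  have hker : χ (g * t * g⁻¹ * t ^ (-γ 0 0 ^ 2)) = 1 :=
    hχ (conj_T_mul_T_zpow_mem_Gamma h₀₁ h₁₀)
  have hpow : χ t ^ (1 - γ 0 0 ^ 2) = 1 := by
    rw [← hker]
    simp [sub_eq_add_neg, _root_.zpow_add]
  rw [← orderOf_dvd_iff_zpow_eq_one, ← ZMod.intCast_zmod_eq_zero_iff_dvd] at hpow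
  have hu : (ZMod.unitsMap hdvd u : ZMod (orderOf (χ t))) = γ 0 0 := by
    rw [ZMod.unitsMap_val, ← hγu, ZMod.cast_intCast hdvd]
  ext
  rw [Units.val_pow_eq_pow_val, hu, Units.val_one, ← sub_eq_zero]
  push_cast at hpow
  linear_combination -hpow

lemma not_Gamma_le_map_ker_of_map_T_pow_24_ne_one {N m : ℕ} [NeZero N] [NeZero m]
    {χ : Gamma0 N →* A} (hχ : χ ⟨T, T_mem_Gamma0 N⟩ ^ 24 ≠ 1) :
    ¬ Gamma m ≤ χ.ker.map (Gamma0 N).subtype := by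
  intro hle
  refine hχ (map_T_pow_24_eq_one_of_Gamma_le_ker
    (Gamma0_le_Gamma0_of_dvd (dvd_mul_right N m)) ?_)
  rw [← Subgroup.comap_map_eq_self_of_injective (Gamma0 N).subtype_injective χ.ker]
  exact Subgroup.comap_mono ((Gamma_le_Gamma_of_dvd (dvd_mul_left m N)).trans hle)

end Arithmetic

/-- There exist infinitely many finite index subgroups of `SL(2, ℤ)` which are not
congruence subgroups, i.e. which contain no principal congruence subgroup `Γ(m)`,
where `Γ(m)` is the kernel of the reduction-mod-`m` map `SL(2, ℤ) → SL(2, ℤ/mℤ)`. -/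
theorem infinitely_many_noncongruence_subgroups :
    {H : Subgroup SL(2, ℤ) | H.FiniteIndex ∧
      ∀ m : ℕ, 0 < m →
        ¬ (Matrix.SpecialLinearGroup.map (Int.castRingHom (ZMod m))).ker ≤ H}.Infinite := by
  choose χ hχ using exists_hom_Gamma0_two_orderOf_T_eq
  refine Set.infinite_of_injective_forall_mem
    (f := fun n : ℕ ↦ (χ (n + 25)).ker.map (Gamma0 2).subtype) (fun n k hnk ↦ ?_) fun n ↦ ⟨?_, ?_⟩
  · have hker := Subgroup.map_injective (Gamma0 2).subtype_injective hnk
    have horder := orderOf_eq_orderOf_iff.mpr fun j ↦ by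
      simpa only [MonoidHom.mem_ker, map_pow] using
        SetLike.ext_iff.mp hker (⟨T, T_mem_Gamma0 2⟩ ^ j)
    rwa [hχ, hχ, add_left_inj] at horder
  · exact finiteIndex_map_subtype _ _
  · intro m hm
    have : NeZero m := ⟨hm.ne'⟩
    refine not_Gamma_le_map_ker_of_map_T_pow_24_ne_one (m := m) (χ := χ (n + 25)) fun h24 ↦ ?_
    have hdvd := orderOf_dvd_of_pow_eq_one h24
    rw [hχ] at hdvd
    have := Nat.le_of_dvd (by norm_num) hdvd
    omega
end

section
/- Let G be a group and ω : G × G × G → ℂˣ a normalized 3-cocycle, i.e. ω(g,h,k)·ω(g,hk,l)·ω(h,k,l) = ω(gh,k,l)·ω(g,h,kl) for all g,h,k,l ∈ G, and ω(1,h,k) = ω(g,1,k) = ω(g,h,1) = 1 for all g,h,k ∈ G. Define θ(x; g,h) = ω(x,g,h) · ω(g,h,(gh)⁻¹x(gh)) / ω(g, g⁻¹xg, h) for x,g,h ∈ G. Then for all x,g,h,k ∈ G one has θ(x; g,h) · θ(x; gh,k) = θ(g⁻¹xg; h,k) · θ(x; g,hk). -/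
/-- The coefficient `θ(x; g, h) = ω(x,g,h)·ω(g,h,(gh)⁻¹x(gh)) / ω(g, g⁻¹xg, h)` appearing
in the multiplication of the `ω`-twisted Drinfeld double `D^ω(G)`. -/
def drinfeldTheta {G : Type*} [Group G] (ω : G → G → G → ℂˣ) (x g h : G) : ℂˣ :=
  ω x g h * ω g h ((g * h)⁻¹ * x * (g * h)) / ω g (g⁻¹ * x * g) h

/-!
Read `θ(x; g, h)` as the value of `ω` on the prism `Δ² × Δ¹` whose two triangles both have edges
`g`, `h` and whose first vertical edge is `x`; the three factors are the tetrahedra of its standard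
triangulation. The twisted coboundary of `θ` is a product over the side prisms of `Δ³ × Δ¹`, which
is triangulated by four 4-simplices. In the product of the values of the coboundary of `ω` on these
simplices the three inner tetrahedra cancel, and so do the two ends, both equal to `ω(g, h, k)`;
the side prisms remain. If `ω` is a cocycle, that product is trivial.
-/

section Prism

variable {S A : Type*} [CommGroup A]

/-- The value of a 3-cochain on the prism `Δ² × Δ¹` whose two triangles have edges `g`, `h`, `g * h`
and whose vertical edges are `x`, `y`, `z`. The squares of the prism commute when
`x * g = g * y` and `y * h = h * z`; these equations are left to the lemmas. -/
def prismValue (ω : S → S → S → A) (x y z g h : S) : A :=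
  ω x g h * ω g h z / ω g y h

variable [Mul S]

/-- The coboundary of a multiplicative 3-cochain with trivial action on the coefficients; `ω` is a
3-cocycle when it is identically `1`. -/
def threeCoboundary (ω : S → S → S → A) (g h k l : S) : A :=
  ω g h k * ω g (h * k) l * ω h k l / (ω (g * h) k l * ω g h (k * l))

theorem prismValue_coboundary (ω : S → S → S → A) {x y z w g h k : S}
    (hxy : SemiconjBy g y x) (hyz : SemiconjBy h z y) (hzw : SemiconjBy k w z) :
    prismValue ω x y z g h * prismValue ω x z w (g * h) k /
        (prismValue ω y z w h k * prismValue ω x y w g (h * k)) =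
      threeCoboundary ω x g h k * threeCoboundary ω g h z k /
        (threeCoboundary ω g y h k * threeCoboundary ω g h k w) := by
  simp only [prismValue, threeCoboundary, hxy.eq, hyz.eq, hzw.eq, div_mul_div_comm,
    div_div_div_eq]
  rw [div_eq_div_iff_mul_eq_mul]
  ac_rfl

theorem prismValue_mul_prismValue_of_cocycle {ω : S → S → S → A}
    (hω : ∀ g h k l, threeCoboundary ω g h k l = 1) {x y z w g h k : S}
    (hxy : SemiconjBy g y x) (hyz : SemiconjBy h z y) (hzw : SemiconjBy k w z) :
    prismValue ω x y z g h * prismValue ω x z w (g * h) k =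
      prismValue ω y z w h k * prismValue ω x y w g (h * k) := by
  rw [← div_eq_one, prismValue_coboundary ω hxy hyz hzw]
  simp only [hω, mul_one, div_one]

end Prism

section Group

variable {G A : Type*} [Group G] [CommGroup A]

/-- The transgression `θ(x; g, h)` of a 3-cochain `ω` with values in an arbitrary commutative group;
for `A = ℂˣ` this is `drinfeldTheta`. -/
def transgression (ω : G → G → G → A) (x g h : G) : A :=
  prismValue ω x (g⁻¹ * x * g) ((g * h)⁻¹ * x * (g * h)) g h

theorem semiconjBy_iff_inv_mul_mul_eq {g x y : G} : SemiconjBy g y x ↔ g⁻¹ * x * g = y := by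
  rw [SemiconjBy, mul_assoc, inv_mul_eq_iff_eq_mul, eq_comm]

theorem transgression_eq_prismValue (ω : G → G → G → A) {x y z g h : G}
    (hxy : SemiconjBy g y x) (hyz : SemiconjBy h z y) :
    transgression ω x g h = prismValue ω x y z g h := by
  rw [transgression, semiconjBy_iff_inv_mul_mul_eq.mp hxy,
    semiconjBy_iff_inv_mul_mul_eq.mp (hxy.mul_left hyz)]

theorem drinfeldTheta_twisted_cocycle_general (ω : G → G → G → A)
    (hcoc : ∀ g h k l : G,
      ω g h k * ω g (h * k) l * ω h k l = ω (g * h) k l * ω g h (k * l))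
    (x g h k : G) :
    transgression ω x g h * transgression ω x (g * h) k =
      transgression ω (g⁻¹ * x * g) h k * transgression ω x g (h * k) := by
  have hω : ∀ g h k l, threeCoboundary ω g h k l = 1 := fun g h k l =>
    div_eq_one.mpr (hcoc g h k l)
  have hconj (a b : G) : SemiconjBy a (a⁻¹ * b * a) b := semiconjBy_iff_inv_mul_mul_eq.mpr rfl
  have hxy := hconj g x
  have hyz := hconj h (g⁻¹ * x * g)
  have hzw := hconj k (h⁻¹ * (g⁻¹ * x * g) * h)
  rw [transgression_eq_prismValue ω hxy hyz,
    transgression_eq_prismValue ω (hxy.mul_left hyz) hzw,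
    transgression_eq_prismValue ω hyz hzw,
    transgression_eq_prismValue ω hxy (hyz.mul_left hzw)]
  exact prismValue_mul_prismValue_of_cocycle hω hxy hyz hzw

end Group

/-- If `ω` is a normalized 3-cocycle on a group `G` with values in `ℂˣ`, then the
coefficient `θ` satisfies the twisted 2-cocycle identity
`θ(x; g,h)·θ(x; gh,k) = θ(g⁻¹xg; h,k)·θ(x; g,hk)`. -/
theorem drinfeldTheta_twisted_cocycle {G : Type*} [Group G] (ω : G → G → G → ℂˣ)
    (hcoc : ∀ g h k l : G,
      ω g h k * ω g (h * k) l * ω h k l = ω (g * h) k l * ω g h (k * l))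
    (hnorm₁ : ∀ h k : G, ω 1 h k = 1)
    (hnorm₂ : ∀ g k : G, ω g 1 k = 1)
    (hnorm₃ : ∀ g h : G, ω g h 1 = 1) :
    ∀ x g h k : G,
      drinfeldTheta ω x g h * drinfeldTheta ω x (g * h) k
        = drinfeldTheta ω (g⁻¹ * x * g) h k * drinfeldTheta ω x g (h * k) :=
  drinfeldTheta_twisted_cocycle_general ω hcoc
end

section
/- Let G be a finite group and ω : G × G × G → ℂˣ a normalized 3-cocycle. On the complex vector space of functions G × G → ℂ, with basis {e_{(x,g)} : x,g ∈ G}, define the bilinear multiplication determined on basis elements by e_{(x,g)} · e_{(y,h)} = θ(x; g,h) · e_{(x,gh)} if x = g y g⁻¹ and e_{(x,g)} · e_{(y,h)} = 0 otherwise, where θ(x; g,h) = ω(x,g,h) · ω(g,h,(gh)⁻¹x(gh)) / ω(g, g⁻¹xg, h). Then this multiplication is associative, and the element Σ_{x ∈ G} e_{(x,1)} is a two-sided multiplicative unit; hence the ω-twisted Drinfeld double D^ω(G) is an associative unital ℂ-algebra. -/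
open scoped BigOperators

/-- The basis element `e_{(x,g)}` of the vector space of functions `G × G → ℂ`. -/
def drinfeldBasis {G : Type*} [DecidableEq G] (q : G × G) : G × G → ℂ :=
  fun p => if p = q then 1 else 0

/-- The multiplication of the `ω`-twisted Drinfeld double `D^ω(G)` on the vector space of
functions `G × G → ℂ`: it is the bilinear extension of
`e_{(x,g)} · e_{(y,h)} = θ(x; g,h) e_{(x,gh)}` if `x = gyg⁻¹`, and `0` otherwise.
Explicitly, `(f₁ · f₂)(x, k) = ∑_{g ∈ G} f₁(x, g) · θ(x; g, g⁻¹k) · f₂(g⁻¹xg, g⁻¹k)`. -/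
noncomputable def drinfeldMul {G : Type*} [Group G] [Fintype G] (ω : G → G → G → ℂˣ)
    (f₁ f₂ : G × G → ℂ) : G × G → ℂ :=
  fun p => ∑ g : G,
    f₁ (p.1, g) * (drinfeldTheta ω p.1 g (g⁻¹ * p.2) : ℂ) * f₂ (g⁻¹ * p.1 * g, g⁻¹ * p.2)

/-!
The twist `θ` is the slant product of `ω`, that is, its transgression along conjugation. For an
arbitrary 3-cochain `ω`, the failure of `θ` to satisfy the conjugation-twisted 2-cocycle identity
is an alternating product of four values of the coboundary `δω`, one for each position of the
conjugated element among `g, h, k`. So `θ` is a twisted 2-cocycle when `ω` is a 3-cocycle, which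
is exactly what associativity needs; normalization of `ω` makes `θ` trivial at the identity, which
gives the unit.
-/

/-- The coboundary `δω` of a 3-cochain `ω` with trivial action on the coefficients, written
multiplicatively; `ω` is a 3-cocycle precisely when `δω = 1`. -/
def threeCochainCoboundary {G M : Type*} [Mul G] [CommGroup M] (ω : G → G → G → M)
    (g h k l : G) : M :=
  ω g h k * ω g (h * k) l * ω h k l / (ω (g * h) k l * ω g h (k * l))

section Cocycle

variable {G : Type*} [Group G] (ω : G → G → G → ℂˣ)

theorem drinfeldTheta_coboundary (x g h k : G) :
    drinfeldTheta ω x g h * drinfeldTheta ω x (g * h) k /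
        (drinfeldTheta ω x g (h * k) * drinfeldTheta ω (g⁻¹ * x * g) h k) =
      threeCochainCoboundary ω x g h k * threeCochainCoboundary ω g h ((g * h)⁻¹ * x * (g * h)) k /
        (threeCochainCoboundary ω g (g⁻¹ * x * g) h k *
          threeCochainCoboundary ω g h k ((g * h * k)⁻¹ * x * (g * h * k))) := by
  obtain ⟨y, rfl⟩ : ∃ y, x = g * y * g⁻¹ := ⟨g⁻¹ * x * g, by group⟩
  obtain ⟨z, rfl⟩ : ∃ z, y = h * z * h⁻¹ := ⟨h⁻¹ * y * h, by group⟩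
  obtain ⟨w, rfl⟩ : ∃ w, z = k * w * k⁻¹ := ⟨k⁻¹ * z * k, by group⟩
  ext
  simp only [drinfeldTheta, threeCochainCoboundary, mul_inv_rev, mul_assoc, inv_mul_cancel_left,
    inv_mul_cancel, mul_one, Units.val_mul, Units.val_div_eq_div_val]
  field_simp

theorem drinfeldTheta_mul_drinfeldTheta
    (hω : ∀ g h k l : G,
      ω g h k * ω g (h * k) l * ω h k l = ω (g * h) k l * ω g h (k * l))
    (x g h k : G) :
    drinfeldTheta ω x g h * drinfeldTheta ω x (g * h) k =
      drinfeldTheta ω x g (h * k) * drinfeldTheta ω (g⁻¹ * x * g) h k := by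
  have coboundary_eq_one (g h k l : G) : threeCochainCoboundary ω g h k l = 1 :=
    div_eq_one.2 (hω g h k l)
  rw [← div_eq_one, drinfeldTheta_coboundary]
  simp only [coboundary_eq_one, mul_one, div_one]

end Cocycle

section Normalization

variable {G : Type*} [Group G] {ω : G → G → G → ℂˣ}

theorem drinfeldTheta_one_left (hω₁ : ∀ h k : G, ω 1 h k = 1) (hω₂ : ∀ g k : G, ω g 1 k = 1)
    (x h : G) : drinfeldTheta ω x 1 h = 1 := by
  simp only [drinfeldTheta, hω₁, hω₂, mul_one, div_one]

theorem drinfeldTheta_one_right (hω₂ : ∀ g k : G, ω g 1 k = 1) (hω₃ : ∀ g h : G, ω g h 1 = 1)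
    (x g : G) : drinfeldTheta ω x g 1 = 1 := by
  simp only [drinfeldTheta, hω₂, hω₃, mul_one, div_one]

end Normalization

theorem sum_drinfeldBasis_left {X : Type*} [Fintype X] [DecidableEq X] (g : X) :
    ∑ x : X, drinfeldBasis (x, g) = fun p => if p.2 = g then 1 else 0 := by
  funext p
  simp [drinfeldBasis, Prod.ext_iff, ite_and]

section Multiplication

variable {G : Type*} [Group G] [Fintype G] {ω : G → G → G → ℂˣ}

theorem drinfeldMul_drinfeldBasis_left_apply [DecidableEq G] (x g : G) (f : G × G → ℂ) (p : G × G) :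
    drinfeldMul ω (drinfeldBasis (x, g)) f p =
      if p.1 = x then
        (drinfeldTheta ω x g (g⁻¹ * p.2) : ℂ) * f (g⁻¹ * x * g, g⁻¹ * p.2)
      else 0 := by
  split_ifs with hx <;> simp [drinfeldMul, drinfeldBasis, hx]

theorem drinfeldMul_drinfeldBasis_drinfeldBasis [DecidableEq G] (x g y h : G) :
    drinfeldMul ω (drinfeldBasis (x, g)) (drinfeldBasis (y, h)) =
      if x = g * y * g⁻¹ then (drinfeldTheta ω x g h : ℂ) • drinfeldBasis (x, g * h) else 0 := by
  have conj_eq_iff : g⁻¹ * x * g = y ↔ x = g * y * g⁻¹ := by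
    rw [mul_assoc, inv_mul_eq_iff_eq_mul, eq_mul_inv_iff_mul_eq]
  funext ⟨a, b⟩
  rw [drinfeldMul_drinfeldBasis_left_apply]
  by_cases hb : b = g * h
  · subst hb
    simp [drinfeldBasis, ← conj_eq_iff, ite_apply, ← ite_and, and_comm]
  · simp [drinfeldBasis, ite_apply, inv_mul_eq_iff_eq_mul, hb]

theorem drinfeldMul_assoc
    (hω : ∀ g h k l : G,
      ω g h k * ω g (h * k) l * ω h k l = ω (g * h) k l * ω g h (k * l))
    (f₁ f₂ f₃ : G × G → ℂ) :
    drinfeldMul ω (drinfeldMul ω f₁ f₂) f₃ = drinfeldMul ω f₁ (drinfeldMul ω f₂ f₃) := by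
  funext ⟨x, m⟩
  simp only [drinfeldMul, Finset.sum_mul, Finset.mul_sum]
  -- Both sides are sums over the factorizations `m = g * h * k`, indexed by `(g * h, g)` on the
  -- left and by `(g, h)` on the right.
  rw [Finset.sum_comm]
  refine Finset.sum_congr rfl fun g _ => ?_
  rw [← Equiv.sum_comp (Equiv.mulLeft g)]
  refine Finset.sum_congr rfl fun h _ => ?_
  obtain ⟨k, rfl⟩ : ∃ k, m = g * h * k := ⟨(g * h)⁻¹ * m, (mul_inv_cancel_left _ _).symm⟩
  have cancel_left : g⁻¹ * (g * h * k) = h * k := by group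
  have conj_conj : (g * h)⁻¹ * x * (g * h) = h⁻¹ * (g⁻¹ * x * g) * h := by group
  have theta_cocycle := congrArg Units.val (drinfeldTheta_mul_drinfeldTheta ω hω x g h k)
  simp only [Units.val_mul] at theta_cocycle
  simp only [Equiv.coe_mulLeft, inv_mul_cancel_left, cancel_left, conj_conj]
  linear_combination (f₁ (x, g) * f₂ (g⁻¹ * x * g, h) *
    f₃ (h⁻¹ * (g⁻¹ * x * g) * h, k)) * theta_cocycle

theorem drinfeldMul_sum_drinfeldBasis_one_left [DecidableEq G]
    (hω₁ : ∀ h k : G, ω 1 h k = 1) (hω₂ : ∀ g k : G, ω g 1 k = 1) (f : G × G → ℂ) :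
    drinfeldMul ω (∑ x : G, drinfeldBasis (x, (1 : G))) f = f := by
  funext p
  rw [sum_drinfeldBasis_left]
  simp [drinfeldMul, drinfeldTheta_one_left hω₁ hω₂]

theorem drinfeldMul_sum_drinfeldBasis_one_right [DecidableEq G]
    (hω₂ : ∀ g k : G, ω g 1 k = 1) (hω₃ : ∀ g h : G, ω g h 1 = 1) (f : G × G → ℂ) :
    drinfeldMul ω f (∑ x : G, drinfeldBasis (x, (1 : G))) = f := by
  funext p
  rw [sum_drinfeldBasis_left]
  simp [drinfeldMul, inv_mul_eq_one, drinfeldTheta_one_right hω₂ hω₃]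

end Multiplication

/-- For a finite group `G` and a normalized 3-cocycle `ω` on `G` with values in `ℂˣ`, the
multiplication of the `ω`-twisted Drinfeld double `D^ω(G)` on functions `G × G → ℂ`:
(i) is given on basis elements by `e_{(x,g)} · e_{(y,h)} = θ(x; g,h) e_{(x,gh)}` when
`x = gyg⁻¹` and `0` otherwise; (ii) is associative; and (iii) has the element
`∑_{x ∈ G} e_{(x,1)}` as a two-sided unit.  Hence `D^ω(G)` is an associative unital
`ℂ`-algebra. -/
theorem drinfeldDouble_associative_unital {G : Type*} [Group G] [Fintype G] [DecidableEq G]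
    (ω : G → G → G → ℂˣ)
    (hcoc : ∀ g h k l : G,
      ω g h k * ω g (h * k) l * ω h k l = ω (g * h) k l * ω g h (k * l))
    (hnorm₁ : ∀ h k : G, ω 1 h k = 1)
    (hnorm₂ : ∀ g k : G, ω g 1 k = 1)
    (hnorm₃ : ∀ g h : G, ω g h 1 = 1) :
    (∀ x g y h : G,
      drinfeldMul ω (drinfeldBasis (x, g)) (drinfeldBasis (y, h))
        = if x = g * y * g⁻¹ then (drinfeldTheta ω x g h : ℂ) • drinfeldBasis (x, g * h)
          else 0) ∧
    (∀ f₁ f₂ f₃ : G × G → ℂ,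
      drinfeldMul ω (drinfeldMul ω f₁ f₂) f₃ = drinfeldMul ω f₁ (drinfeldMul ω f₂ f₃)) ∧
    (∀ f : G × G → ℂ,
      drinfeldMul ω (∑ x : G, drinfeldBasis (x, (1 : G))) f = f ∧
      drinfeldMul ω f (∑ x : G, drinfeldBasis (x, (1 : G))) = f) := by
  exact ⟨drinfeldMul_drinfeldBasis_drinfeldBasis, drinfeldMul_assoc hcoc, fun f =>
    ⟨drinfeldMul_sum_drinfeldBasis_one_left hnorm₁ hnorm₂ f,
      drinfeldMul_sum_drinfeldBasis_one_right hnorm₂ hnorm₃ f⟩⟩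
end
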